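/- Let t be a planar binary rooted tree with n leaves written as t = 1_r ∘ (t₁,…,t_{r−1}, |) with r < n, where 1_r is the right comb with r leaves. Then the Möbius element factors as M_t = M_{1_r} ∘ (M_{t₁}, …, M_{t_{r−1}}, |). -/

import Mathlib

open Classical

/-- Planar binary rooted trees. `leaf` is the unique tree `|` with one leaf. -/
inductive PBT : Type
  | leaf : PBT
  | node : PBT → PBT → PBT
  deriving DecidableEq

/-- Number of leaves of a planar binary rooted tree. -/
def leavesCount : PBT → ℕ
  | .leaf => 1
  | .node l r => leavesCount l + leavesCount r

/-- Graft the tree `w` onto the leftmost (first) leaf of `t`. -/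
def graft1 : PBT → PBT → PBT
  | .leaf, w => w
  | .node l r, w => .node (graft1 l w) r

/-- The product `t ⋋ w := w ∘₁ (t ∨ |)`. -/
def lprod (t w : PBT) : PBT := graft1 w (.node t .leaf)

/-- A tree is `⋋`-irreducible if it is not a product of two (nonempty) trees. -/
def Irr (t : PBT) : Prop := ¬ ∃ u w : PBT, t = lprod u w

/-- One covering move of the Tamari order: a right rotation
`(a ∨ b) ∨ c ↦ a ∨ (b ∨ c)` applied at some internal node. -/
inductive TStep : PBT → PBT → Prop
  | rot (a b c : PBT) : TStep (.node (.node a b) c) (.node a (.node b c))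
  | left {a a' : PBT} (c : PBT) : TStep a a' → TStep (.node a c) (.node a' c)
  | right (a : PBT) {c c' : PBT} : TStep c c' → TStep (.node a c) (.node a c')

/-- The Tamari order on planar binary rooted trees: the reflexive transitive
closure of the rotation moves. -/
def tle : PBT → PBT → Prop := Relation.ReflTransGen TStep

/-- Auxiliary function: graft trees from the list `ws` onto the leaves of `t`
from left to right, returning the resulting tree and the unused trees. -/
def graftAux : PBT → List PBT → PBT × List PBT
  | .leaf, [] => (.leaf, [])
  | .leaf, w :: ws => (w, ws)
  | .node l r, ws =>
      let p := graftAux l ws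
      let q := graftAux r p.2
      (.node p.1 q.1, q.2)

/-- The grafting `t ∘ (w₁, …, w_r)`: graft the trees of the list `ws`
onto the leaves of `t`, from left to right. -/
def graftMany (t : PBT) (ws : List PBT) : PBT := (graftAux t ws).1

/-- The right comb `1ₙ`: `rightComb n` has `n+1` leaves, so `1ₙ = rightComb (n-1)`. -/
def rightComb : ℕ → PBT
  | 0 => .leaf
  | n + 1 => .node .leaf (rightComb n)

/-- The left comb `0ₙ`: `leftComb n` has `n+1` leaves, so `0ₙ = leftComb (n-1)`. -/
def leftComb : ℕ → PBT
  | 0 => .leaf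
  | n + 1 => .node (leftComb n) .leaf

/-- The multilinear extension of lists: sends a list of elements of the free
module on trees to an element of the free module on lists of trees. -/
noncomputable def listF : List (PBT →₀ ℤ) → (List PBT →₀ ℤ)
  | [] => Finsupp.single [] 1
  | g :: gs =>
      g.sum fun t a => (listF gs).sum fun l b => (a * b) • Finsupp.single (t :: l) 1

/-- The multilinear extension of the grafting operation `t₀ ∘ (w₁,…,w_r)`. -/
noncomputable def graftManyF (f : PBT →₀ ℤ) (gs : List (PBT →₀ ℤ)) : PBT →₀ ℤ :=
  f.sum fun t a => (listF gs).sum fun ws b => (a * b) • Finsupp.single (graftMany t ws) 1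

/-!
The Möbius element `M_t` is the unique element of the free module whose zeta transform
`w ↦ ∑_{w ≤ z} M_t z` is the indicator of `t`. Everything below a graft `z ∘₁ x` in the Tamari
order is again a graft, componentwise below it, so `M_{z ∘₁ x} = M_z ∘₁ M_x`. Deletion of the
leftmost leaf is left adjoint to `y ↦ | ∨ y`, which computes the zeta transform of `| ∨ M_y` and
yields the recursion
`M_{x ∨ (l ∨ r)} = M_x ∨ M_{l ∨ r} - M_{| ∨ r} ∘₁ (M_x ∨ M_l)`.
The factorization `M_t = M_{1_r} ∘ (M_{t₁}, …, M_{t_{r−1}}, |)` follows by induction on `r`, since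
both sides satisfy this recursion.
-/

/-! ### Bilinear extension of binary operations -/

section BilinExt

open Finsupp

variable {R α β γ : Type*} [CommSemiring R]

/-- The bilinear extension of a binary operation to free modules. It expresses both `listF`
(for `List.cons`) and `graftManyF` (for `graftMany`). -/
noncomputable def bilinExt (op : α → β → γ) : (α →₀ R) →ₗ[R] (β →₀ R) →ₗ[R] (γ →₀ R) :=
  linearCombination R fun a => lmapDomain R R (op a)

theorem bilinExt_eq_sum (op : α → β → γ) (f : α →₀ R) (g : β →₀ R) :
    bilinExt op f g = f.sum fun a x => g.sum fun b y => (x * y) • single (op a b) 1 := by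
  simp [bilinExt, linearCombination_apply, Finsupp.sum, mapDomain, Finset.smul_sum]

theorem bilinExt_single_one_single_one (op : α → β → γ) (a : α) (b : β) :
    bilinExt op (single a (1 : R)) (single b 1) = single (op a b) 1 := by
  simp [bilinExt]

theorem linearCombination_bilinExt (G : γ → R) (op : α → β → γ) (f : α →₀ R) (g : β →₀ R) :
    linearCombination R G (bilinExt op f g) =
      linearCombination R (fun a => linearCombination R (fun b => G (op a b)) g) f := by
  induction f using Finsupp.induction_linear with
  | zero => simp
  | add f₁ f₂ h₁ h₂ => simp only [map_add, LinearMap.add_apply, h₁, h₂]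
  | single a x => simp [bilinExt, linearCombination_mapDomain, Function.comp_def]

theorem linearCombination_comm (G : α → β → R) (f : α →₀ R) (g : β →₀ R) :
    linearCombination R (fun a => linearCombination R (fun b => G a b) g) f =
      linearCombination R (fun b => linearCombination R (fun a => G a b) f) g := by
  simp only [linearCombination_apply, Finsupp.sum, Finset.smul_sum]
  rw [Finset.sum_comm]
  exact Finset.sum_congr rfl fun b _ => Finset.sum_congr rfl fun a _ => smul_comm _ _ _

theorem linearCombination_mul (G : α → R) (H : β → R) (f : α →₀ R) (g : β →₀ R) :
    linearCombination R (fun a => linearCombination R (fun b => G a * H b) g) f =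
      linearCombination R G f * linearCombination R H g := by
  simp only [linearCombination_apply, Finsupp.sum, smul_eq_mul, Finset.mul_sum, Finset.sum_mul]
  rw [Finset.sum_comm]
  exact Finset.sum_congr rfl fun b _ => Finset.sum_congr rfl fun a _ => by ring

theorem linearCombination_congr {G H : α → R} {f : α →₀ R} (h : ∀ a ∈ f.support, G a = H a) :
    linearCombination R G f = linearCombination R H f :=
  Finsupp.sum_congr fun a ha => congrArg (f a • ·) (h a ha)

theorem eq_of_linearCombination_eq {f g : α →₀ R}
    (h : ∀ G : α → R, linearCombination R G f = linearCombination R G g) : f = g := by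
  ext a
  simpa only [linearCombination_apply, smul_eq_mul, mul_ite, mul_one, mul_zero,
    sum_ite_self_eq] using h fun b => if a = b then 1 else 0

end BilinExt

/-! ### Möbius elements of a partial order -/

section ZetaTransform

open Finsupp

variable {R α : Type*} [CommSemiring R] [PartialOrder α]

/-- The zeta transform `f ↦ (w ↦ ∑_{w ≤ z} f z)`, whose injectivity characterizes Möbius
elements. -/
noncomputable def zetaTransform : (α →₀ R) →ₗ[R] (α → R) :=
  LinearMap.pi fun w => linearCombination R fun z => if w ≤ z then 1 else 0

theorem zetaTransform_apply (f : α →₀ R) (w : α) :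
    zetaTransform f w = linearCombination R (fun z => if w ≤ z then (1 : R) else 0) f :=
  rfl

theorem zetaTransform_apply_of_maximal {f : α →₀ R} {w : α} (h : Maximal (· ∈ f.support) w) :
    zetaTransform f w = f w := by
  rw [zetaTransform_apply, linearCombination_apply, Finsupp.sum, Finset.sum_eq_single_of_mem w h.1]
  · simp
  · intro z hz hzw
    rw [if_neg fun hwz => hzw (h.eq_of_ge hz hwz), smul_zero]

theorem zetaTransform_injective {R : Type*} [CommRing R] :
    Function.Injective (zetaTransform : (α →₀ R) →ₗ[R] (α → R)) := by
  rw [injective_iff_map_eq_zero]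
  intro f hf
  by_contra hne
  obtain ⟨w, hw⟩ := f.support.exists_maximal (support_nonempty_iff.2 hne)
  exact mem_support_iff.1 hw.1 (by rw [← zetaTransform_apply_of_maximal hw, hf, Pi.zero_apply])

theorem zetaTransform_apply_eq_finsum {f : α →₀ R} {t : α} (hf : ∀ w, ¬ w ≤ t → f w = 0) (w : α) :
    zetaTransform f w = ∑ᶠ z, if w ≤ z ∧ z ≤ t then f z else 0 := by
  rw [finsum_eq_sum_of_support_subset (s := f.support), zetaTransform_apply,
    linearCombination_apply, Finsupp.sum]
  · refine Finset.sum_congr rfl fun z hz => ?_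
    have hzt : z ≤ t := not_not.1 fun h => mem_support_iff.1 hz (hf z h)
    simp [hzt]
  · intro z hz
    rw [Finset.mem_coe, mem_support_iff]
    exact fun h => hz (by simp [h])

variable [DecidableEq α]

/-- `f` is the Möbius element `∑_{w ≤ t} μ(w, t) • w` of `t`: Möbius inversion turns the defining
recursion of `μ(·, t)` into this equation. -/
def IsMoebiusElement (f : α →₀ R) (t : α) : Prop :=
  zetaTransform f = Pi.single t 1

theorem IsMoebiusElement.unique {R : Type*} [CommRing R] {f g : α →₀ R} {t : α}
    (hf : IsMoebiusElement f t) (hg : IsMoebiusElement g t) : f = g :=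
  zetaTransform_injective (hf.trans hg.symm)

theorem IsMoebiusElement.le_of_mem_support {f : α →₀ R} {t w : α} (hf : IsMoebiusElement f t)
    (hw : w ∈ f.support) : w ≤ t := by
  obtain ⟨m, hwm, hm⟩ := f.support.exists_le_maximal hw
  suffices m = t from this ▸ hwm
  by_contra hmt
  refine mem_support_iff.1 hm.1 ?_
  rw [← zetaTransform_apply_of_maximal hm, hf, Pi.single_eq_of_ne hmt]

theorem isMoebiusElement_of_finsum {f : α →₀ R} {t : α} (hone : f t = 1)
    (hzero : ∀ w, ¬ w ≤ t → f w = 0)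
    (hsum : ∀ w, w ≤ t → w ≠ t → (∑ᶠ z, if w ≤ z ∧ z ≤ t then f z else 0) = 0) :
    IsMoebiusElement f t := by
  funext w
  rw [zetaTransform_apply_eq_finsum hzero]
  rcases eq_or_ne w t with rfl | hwt
  · rw [finsum_eq_single _ w fun z hz => if_neg fun h => hz (le_antisymm h.2 h.1)]
    simp [hone]
  rw [Pi.single_eq_of_ne hwt]
  by_cases hle : w ≤ t
  · exact hsum w hle hwt
  · exact finsum_eq_zero_of_forall_eq_zero fun z => if_neg fun h => hle (h.1.trans h.2)

end ZetaTransform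

namespace PBT

/-! ### The Tamari order -/

theorem leavesCount_pos (t : PBT) : 0 < leavesCount t := by
  induction t with
  | leaf => exact Nat.one_pos
  | node l r hl _ => exact Nat.add_pos_left hl _

theorem leavesCount_eq_one_iff {t : PBT} : leavesCount t = 1 ↔ t = leaf := by
  cases t with
  | leaf => exact iff_of_true rfl rfl
  | node l r =>
    have := leavesCount_pos l
    have := leavesCount_pos r
    simp only [leavesCount, reduceCtorEq, iff_false]
    omega

/-- The total number of leaves of the right subtrees of `t`; it strictly increases along
rotations, so it witnesses antisymmetry of the Tamari order. -/
def rightWeight : PBT → ℕ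
  | leaf => 0
  | node l r => rightWeight l + rightWeight r + leavesCount r

end PBT

theorem TStep.leavesCount_eq {w t : PBT} (h : TStep w t) : leavesCount w = leavesCount t := by
  induction h with
  | rot a b c => exact Nat.add_assoc _ _ _
  | left c _ ih | right a _ ih => simp only [leavesCount, ih]

theorem TStep.rightWeight_lt {w t : PBT} (h : TStep w t) : w.rightWeight < t.rightWeight := by
  induction h with
  | rot a b c =>
    have := PBT.leavesCount_pos c
    simp only [PBT.rightWeight, leavesCount]
    omega
  | left c _ ih => simpa only [PBT.rightWeight, add_lt_add_iff_right] using ih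
  | right a h ih =>
    simp only [PBT.rightWeight, h.leavesCount_eq]
    omega

namespace PBT

theorem eq_or_rightWeight_lt_of_tle {w t : PBT} (h : tle w t) :
    w = t ∨ w.rightWeight < t.rightWeight := by
  induction h with
  | refl => exact .inl rfl
  | tail _ hstep ih =>
    exact .inr (ih.elim (· ▸ hstep.rightWeight_lt) (·.trans hstep.rightWeight_lt))

instance : PartialOrder PBT where
  le := tle
  le_refl _ := .refl
  le_trans _ _ _ := .trans
  le_antisymm w t hwt htw := by
    rcases eq_or_rightWeight_lt_of_tle hwt, eq_or_rightWeight_lt_of_tle htw with ⟨h | h, h' | h'⟩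
    exacts [h, h, h'.symm, absurd h' h.asymm]

theorem leavesCount_eq_of_le {w t : PBT} (h : w ≤ t) : leavesCount w = leavesCount t := by
  induction h with
  | refl => rfl
  | tail _ hstep ih => exact ih.trans hstep.leavesCount_eq

theorem le_leaf_iff {t : PBT} : t ≤ leaf ↔ t = leaf :=
  ⟨fun h => leavesCount_eq_one_iff.1 (leavesCount_eq_of_le h), le_of_eq⟩

theorem leaf_le_iff {t : PBT} : leaf ≤ t ↔ t = leaf :=
  ⟨fun h => leavesCount_eq_one_iff.1 (leavesCount_eq_of_le h).symm, ge_of_eq⟩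

theorem monotone_of_tstep {φ : PBT → PBT} (h : ∀ w t, TStep w t → φ w ≤ φ t) : Monotone φ := by
  intro w t hwt
  induction hwt with
  | refl => exact le_rfl
  | tail _ hstep ih => exact ih.trans (h _ _ hstep)

theorem node_mono_left (r : PBT) : Monotone (node · r) :=
  monotone_of_tstep fun _ _ h => .single (.left r h)

theorem node_mono_right (l : PBT) : Monotone (node l) :=
  monotone_of_tstep fun _ _ h => .single (.right l h)

theorem node_node_le (a b c : PBT) : node (node a b) c ≤ node a (node b c) :=
  .single (.rot a b c)

/-! ### Grafting on the leftmost leaf -/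

theorem graft1_assoc (a b c : PBT) : graft1 (graft1 a b) c = graft1 a (graft1 b c) := by
  induction a with
  | leaf => rfl
  | node l r hl _ => simp only [graft1, hl]

theorem graft1_mono_left (x : PBT) : Monotone (graft1 · x) := by
  refine monotone_of_tstep fun z z' h => ?_
  induction h with
  | rot a b c => exact node_node_le _ b c
  | left c _ ih => exact node_mono_left c ih
  | right a h _ => exact node_mono_right _ (.single h)

theorem graft1_mono_right (z : PBT) : Monotone (graft1 z) := by
  induction z with
  | leaf => exact monotone_id
  | node l r hl _ => exact (node_mono_left r).comp hl

theorem graft1_inj_of_leavesCount_eq {z z' x x' : PBT} (hz : leavesCount z = leavesCount z')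
    (h : graft1 z x = graft1 z' x') : z = z' ∧ x = x' := by
  induction z generalizing z' with
  | leaf =>
    obtain rfl := leavesCount_eq_one_iff.1 hz.symm
    exact ⟨rfl, h⟩
  | node l r hl _ =>
    cases z' with
    | leaf => exact absurd (leavesCount_eq_one_iff.1 hz) nofun
    | node l' r' =>
      obtain ⟨hl', rfl⟩ := node.inj h
      obtain ⟨rfl, hx⟩ := hl (Nat.add_right_cancel hz) hl'
      exact ⟨rfl, hx⟩

theorem graft1_injective (z : PBT) : Function.Injective (graft1 z) :=
  fun _ _ h => (graft1_inj_of_leavesCount_eq rfl h).2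

theorem exists_eq_graft1_of_tstep {w z x : PBT} (h : TStep w (graft1 z x)) :
    ∃ z' ≤ z, ∃ x' ≤ x, w = graft1 z' x' := by
  induction z generalizing w with
  | leaf => exact ⟨leaf, le_rfl, w, .single h, rfl⟩
  | node l r hl _ =>
    rw [graft1] at h
    cases h with
    | rot _ b c => exact ⟨node (node l b) c, node_node_le l b c, x, le_rfl, rfl⟩
    | left _ h =>
      obtain ⟨l', hl', x', hx', rfl⟩ := hl h
      exact ⟨node l' r, node_mono_left r hl', x', hx', rfl⟩
    | @right _ r' _ h => exact ⟨node l r', node_mono_right l (.single h), x, le_rfl, rfl⟩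

theorem exists_eq_graft1_of_le {w z x : PBT} (h : w ≤ graft1 z x) :
    ∃ z' ≤ z, ∃ x' ≤ x, w = graft1 z' x' := by
  induction h using Relation.ReflTransGen.head_induction_on with
  | refl => exact ⟨z, le_rfl, x, le_rfl, rfl⟩
  | head hstep _ ih =>
    obtain ⟨z', hz', x', hx', rfl⟩ := ih
    obtain ⟨z'', hz'', x'', hx'', rfl⟩ := exists_eq_graft1_of_tstep hstep
    exact ⟨z'', hz''.trans hz', x'', hx''.trans hx', rfl⟩

theorem graft1_le_graft1_iff {z z' x x' : PBT} (hz : leavesCount z = leavesCount z') :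
    graft1 z x ≤ graft1 z' x' ↔ z ≤ z' ∧ x ≤ x' := by
  refine ⟨fun h => ?_, fun h => (graft1_mono_left x h.1).trans (graft1_mono_right z' h.2)⟩
  obtain ⟨z₁, hz₁, x₁, hx₁, heq⟩ := exists_eq_graft1_of_le h
  obtain ⟨rfl, rfl⟩ := graft1_inj_of_leavesCount_eq (hz.trans (leavesCount_eq_of_le hz₁).symm) heq
  exact ⟨hz₁, hx₁⟩

/-! ### Deletion of the leftmost leaf -/

/-- Deletion of the leftmost leaf of a tree, left adjoint to `y ↦ | ∨ y`; the tree `|` is sent to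
itself. -/
def eraseFirst : PBT → PBT
  | leaf => leaf
  | node leaf r => r
  | node (node a b) r => node (eraseFirst (node a b)) r

theorem eraseFirst_node_of_ne_leaf {l : PBT} (hl : l ≠ leaf) (r : PBT) :
    eraseFirst (node l r) = node (eraseFirst l) r := by
  cases l with
  | leaf => exact absurd rfl hl
  | node a b => rfl

theorem eraseFirst_mono : Monotone eraseFirst := by
  refine monotone_of_tstep fun w t h => ?_
  induction h with
  | rot a b c =>
    cases a with
    | leaf => exact le_rfl
    | node a₁ a₂ => exact node_node_le _ b c
  | @left a a' c h ih =>
    have ha : a ≠ leaf := by rintro rfl; exact nomatch h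
    have ha' : a' ≠ leaf := by rintro rfl; exact nomatch h
    rw [eraseFirst_node_of_ne_leaf ha, eraseFirst_node_of_ne_leaf ha']
    exact node_mono_left c ih
  | right a h _ =>
    cases a with
    | leaf => exact .single h
    | node a₁ a₂ => exact node_mono_right _ (.single h)

theorem le_node_leaf_eraseFirst {w : PBT} (hw : w ≠ leaf) : w ≤ node leaf (eraseFirst w) := by
  induction w with
  | leaf => exact absurd rfl hw
  | node l r hl _ =>
    rcases eq_or_ne l leaf with rfl | hl'
    · exact le_rfl
    · rw [eraseFirst_node_of_ne_leaf hl']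
      exact (node_mono_left r (hl hl')).trans (node_node_le _ _ _)

theorem le_node_leaf_iff {w y : PBT} : w ≤ node leaf y ↔ w ≠ leaf ∧ eraseFirst w ≤ y := by
  constructor
  · intro h
    refine ⟨?_, eraseFirst_mono h⟩
    rintro rfl
    exact nomatch leaf_le_iff.1 h
  · rintro ⟨hw, h⟩
    exact (le_node_leaf_eraseFirst hw).trans (node_mono_right leaf h)

/-! ### Möbius elements of the Tamari order -/

section Moebius

open Finsupp

variable {R : Type*} [CommSemiring R]

theorem isMoebiusElement_leaf : IsMoebiusElement (single leaf (1 : R)) leaf := by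
  funext w
  simp only [zetaTransform_apply, linearCombination_single, one_smul, le_leaf_iff, Pi.single_apply]

theorem zetaTransform_graft1_apply {f : PBT →₀ R} {q : PBT}
    (hf : ∀ z ∈ f.support, leavesCount z = leavesCount q) (g : PBT →₀ R) (x : PBT) :
    zetaTransform (bilinExt graft1 f g) (graft1 q x) = zetaTransform f q * zetaTransform g x := by
  simp only [zetaTransform_apply, linearCombination_bilinExt, ← linearCombination_mul]
  refine linearCombination_congr fun z hz => congrArg (linearCombination R · g) (funext fun b => ?_)
  simp only [graft1_le_graft1_iff (hf z hz).symm, ite_and, ite_mul, one_mul, zero_mul]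

theorem zetaTransform_graft1 {f : PBT →₀ R} {z : PBT} (hf : IsMoebiusElement f z)
    (g : PBT →₀ R) :
    zetaTransform (bilinExt graft1 f g) = Function.extend (graft1 z) (zetaTransform g) 0 := by
  have hcount : ∀ z' ∈ f.support, leavesCount z' = leavesCount z := fun z' hz' =>
    leavesCount_eq_of_le (hf.le_of_mem_support hz')
  funext w
  by_cases hw : ∃ q x, leavesCount q = leavesCount z ∧ w = graft1 q x
  · obtain ⟨q, x, hq, rfl⟩ := hw
    rw [zetaTransform_graft1_apply (hq ▸ hcount), hf]
    rcases eq_or_ne q z with rfl | hqz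
    · rw [Pi.single_eq_same, one_mul, (graft1_injective q).extend_apply]
    · rw [Pi.single_eq_of_ne hqz, zero_mul, Function.extend_apply', Pi.zero_apply]
      rintro ⟨x', hx'⟩
      exact hqz (graft1_inj_of_leavesCount_eq hq.symm hx').1.symm
  · rw [Function.extend_apply' _ _ _ fun ⟨x, hx⟩ => hw ⟨z, x, rfl, hx.symm⟩]
    have hle : ∀ z' ∈ f.support, ∀ b, ¬ w ≤ graft1 z' b := by
      intro z' hz' b h
      obtain ⟨q, hq, x, -, rfl⟩ := exists_eq_graft1_of_le h
      exact hw ⟨q, x, (leavesCount_eq_of_le hq).trans (hcount z' hz'), rfl⟩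
    rw [zetaTransform_apply, linearCombination_bilinExt,
      linearCombination_congr (H := 0) fun z' hz' => ?_]
    · simp
    · simp [hle z' hz', linearCombination_apply]

theorem isMoebiusElement_graft1 {f g : PBT →₀ R} {z x : PBT} (hf : IsMoebiusElement f z)
    (hg : IsMoebiusElement g x) : IsMoebiusElement (bilinExt graft1 f g) (graft1 z x) := by
  rw [IsMoebiusElement, zetaTransform_graft1 hf, hg]
  funext w
  by_cases hw : ∃ y, graft1 z y = w
  · obtain ⟨y, rfl⟩ := hw
    simp only [(graft1_injective z).extend_apply, Pi.single_apply, (graft1_injective z).eq_iff]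
  · rw [Function.extend_apply' _ _ _ hw, Pi.zero_apply,
      Pi.single_eq_of_ne fun h => hw ⟨x, h.symm⟩]

theorem zetaTransform_node_leaf_apply (f : PBT →₀ R) (w : PBT) :
    zetaTransform (bilinExt node (single leaf 1) f) w =
      if w = leaf then 0 else zetaTransform f (eraseFirst w) := by
  simp only [zetaTransform_apply, linearCombination_bilinExt, linearCombination_single, one_smul,
    le_node_leaf_iff]
  split_ifs with hw <;> simp [hw, linearCombination_apply]

theorem isMoebiusElement_node_leaf_leaf :
    IsMoebiusElement (single (node leaf leaf) (1 : R)) (node leaf leaf) := by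
  rw [← bilinExt_single_one_single_one]
  funext w
  rw [zetaTransform_node_leaf_apply, isMoebiusElement_leaf]
  rcases w with _ | ⟨_ | ⟨a, b⟩, r⟩ <;> simp [eraseFirst, Pi.single_apply]

theorem isMoebiusElement_node_leaf_node {R : Type*} [CommRing R] {f g h : PBT →₀ R} {l r : PBT}
    (hf : IsMoebiusElement f (node l r)) (hg : IsMoebiusElement g (node leaf r))
    (hh : IsMoebiusElement h l) :
    IsMoebiusElement (bilinExt node (single leaf 1) f -
      bilinExt graft1 g (bilinExt node (single leaf 1) h)) (node leaf (node l r)) := by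
  funext w
  rw [map_sub, Pi.sub_apply, zetaTransform_node_leaf_apply, hf, zetaTransform_graft1 hg]
  by_cases hw : ∃ a, graft1 (node leaf r) a = w
  · obtain ⟨a, rfl⟩ := hw
    rw [(graft1_injective _).extend_apply, zetaTransform_node_leaf_apply, hh]
    cases a <;> simp [graft1, eraseFirst, Pi.single_apply]
  · rw [Function.extend_apply' _ _ _ hw]
    rcases w with _ | ⟨_ | ⟨a, b⟩, s⟩
    · simp
    · simp [eraseFirst, Pi.single_apply]
    · have hs : s ≠ r := by rintro rfl; exact hw ⟨node a b, rfl⟩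
      simp [eraseFirst, hs]

theorem isMoebiusElement_node_leaf {f : PBT →₀ R} {x : PBT} (hf : IsMoebiusElement f x) :
    IsMoebiusElement (bilinExt node f (single leaf 1)) (node x leaf) := by
  have hgraft : bilinExt node f (single leaf 1) =
      bilinExt graft1 (single (node leaf leaf) 1) f := by
    refine eq_of_linearCombination_eq fun G => ?_
    simp only [linearCombination_bilinExt, linearCombination_single, one_smul, graft1]
  rw [hgraft]
  exact isMoebiusElement_graft1 isMoebiusElement_node_leaf_leaf hf

theorem graft1_node_leaf (e f : PBT →₀ R) :
    bilinExt graft1 (bilinExt node (single leaf 1) f) e = bilinExt node e f := by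
  refine eq_of_linearCombination_eq fun G => ?_
  simp only [linearCombination_bilinExt, linearCombination_single, one_smul, graft1]
  exact linearCombination_comm _ _ _

theorem graft1_graft1_node_leaf (e g h : PBT →₀ R) :
    bilinExt graft1 (bilinExt graft1 g (bilinExt node (single leaf 1) h)) e =
      bilinExt graft1 g (bilinExt node e h) := by
  refine eq_of_linearCombination_eq fun G => ?_
  simp only [linearCombination_bilinExt, linearCombination_single, one_smul, graft1_assoc, graft1]
  exact congrArg (linearCombination R · g) (funext fun _ => linearCombination_comm _ _ _)

theorem isMoebiusElement_node_node {R : Type*} [CommRing R] {e f g h : PBT →₀ R} {x l r : PBT}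
    (he : IsMoebiusElement e x) (hf : IsMoebiusElement f (node l r))
    (hg : IsMoebiusElement g (node leaf r)) (hh : IsMoebiusElement h l) :
    IsMoebiusElement (bilinExt node e f - bilinExt graft1 g (bilinExt node e h))
      (node x (node l r)) := by
  rw [← graft1_node_leaf e f, ← graft1_graft1_node_leaf e g h, ← LinearMap.sub_apply,
    ← map_sub (bilinExt (R := R) graft1)]
  exact isMoebiusElement_graft1 (isMoebiusElement_node_leaf_node hf hg hh) he

end Moebius

/-! ### Grafting forests -/

section Grafting

open Finsupp

theorem graftMany_node_leaf_cons (v x : PBT) (ws : List PBT) :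
    graftMany (node leaf v) (x :: ws) = node x (graftMany v ws) :=
  rfl

theorem graftAux_graft1_cherry (v x y : PBT) (ws : List PBT) :
    graftAux (graft1 v (node leaf leaf)) (x :: y :: ws) = graftAux v (node x y :: ws) := by
  induction v with
  | leaf => rfl
  | node l r hl _ => simp only [graft1, graftAux, hl]

theorem graftAux_cons_eq_graft1 (v x : PBT) (ws : List PBT) :
    graftAux v (x :: ws) =
      (graft1 (graftAux v (leaf :: ws)).1 x, (graftAux v (leaf :: ws)).2) := by
  induction v with
  | leaf => rfl
  | node l r hl _ => simp only [graftAux, graft1, hl]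

theorem graft1_graftMany_leaf_cons (v x : PBT) (ws : List PBT) :
    graft1 (graftMany v (leaf :: ws)) x = graftMany v (x :: ws) :=
  (congrArg Prod.fst (graftAux_cons_eq_graft1 v x ws)).symm

theorem graftManyF_eq_bilinExt (f : PBT →₀ ℤ) (gs : List (PBT →₀ ℤ)) :
    graftManyF f gs = bilinExt graftMany f (listF gs) :=
  (bilinExt_eq_sum _ _ _).symm

theorem listF_cons (g : PBT →₀ ℤ) (gs : List (PBT →₀ ℤ)) :
    listF (g :: gs) = bilinExt List.cons g (listF gs) :=
  (bilinExt_eq_sum _ _ _).symm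

theorem graftManyF_leaf_leaf :
    graftManyF (single leaf 1) [single leaf 1] = single leaf 1 := by
  rw [graftManyF_eq_bilinExt, listF_cons, listF, bilinExt_single_one_single_one,
    bilinExt_single_one_single_one]
  rfl

theorem graftManyF_sub (f f' : PBT →₀ ℤ) (gs : List (PBT →₀ ℤ)) :
    graftManyF (f - f') gs = graftManyF f gs - graftManyF f' gs := by
  simp only [graftManyF_eq_bilinExt, map_sub, LinearMap.sub_apply]

theorem graftManyF_node_leaf_cons (f g : PBT →₀ ℤ) (gs : List (PBT →₀ ℤ)) :
    graftManyF (bilinExt node (single leaf 1) f) (g :: gs) =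
      bilinExt node g (graftManyF f gs) := by
  refine eq_of_linearCombination_eq fun G => ?_
  simp only [graftManyF_eq_bilinExt, listF_cons, linearCombination_bilinExt,
    linearCombination_single, one_smul, graftMany_node_leaf_cons]
  exact linearCombination_comm _ _ _

theorem graftManyF_graft1_cherry (f g h : PBT →₀ ℤ) (gs : List (PBT →₀ ℤ)) :
    graftManyF (bilinExt graft1 f (single (node leaf leaf) 1)) (g :: h :: gs) =
      graftManyF f (bilinExt node g h :: gs) := by
  refine eq_of_linearCombination_eq fun G => ?_
  simp only [graftManyF_eq_bilinExt, listF_cons, linearCombination_bilinExt,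
    linearCombination_single, one_smul, graftMany, graftAux_graft1_cherry]

theorem graft1_graftManyF_leaf_cons (f h : PBT →₀ ℤ) (gs : List (PBT →₀ ℤ)) :
    bilinExt graft1 (graftManyF f (single leaf 1 :: gs)) h = graftManyF f (h :: gs) := by
  refine eq_of_linearCombination_eq fun G => ?_
  simp only [graftManyF_eq_bilinExt, listF_cons, linearCombination_bilinExt,
    linearCombination_single, one_smul, graft1_graftMany_leaf_cons]
  exact congrArg (linearCombination ℤ · f) (funext fun _ => linearCombination_comm _ _ _)

theorem moebius_graftMany_rightComb {M : PBT → PBT →₀ ℤ}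
    (hM : ∀ t, IsMoebiusElement (M t) t) : ∀ ts : List PBT,
    M (graftMany (rightComb ts.length) (ts ++ [leaf])) =
      graftManyF (M (rightComb ts.length)) (ts.map M ++ [single leaf 1])
  | [] => by
    have hleaf : M leaf = single leaf 1 := (hM leaf).unique isMoebiusElement_leaf
    simp only [List.length_nil, List.map_nil, List.nil_append, rightComb, hleaf,
      graftManyF_leaf_leaf]
    exact hleaf
  | [x] => by
    have hx : M (node x leaf) = bilinExt node (M x) (single leaf 1) :=
      (hM _).unique (isMoebiusElement_node_leaf (hM x))
    have hcherry : M (node leaf leaf) = bilinExt node (single leaf 1) (single leaf 1) :=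
      (hM _).unique (isMoebiusElement_node_leaf isMoebiusElement_leaf)
    simp only [List.length_singleton, List.map_cons, List.map_nil, List.cons_append,
      List.nil_append, rightComb, hcherry, graftManyF_node_leaf_cons, graftManyF_leaf_leaf]
    exact hx
  | x :: l :: ts => by
    have hleaf : M leaf = single leaf 1 := (hM leaf).unique isMoebiusElement_leaf
    have hrec (x l r : PBT) : M (node x (node l r)) = bilinExt node (M x) (M (node l r)) -
        bilinExt graft1 (M (node leaf r)) (bilinExt node (M x) (M l)) :=
      (hM _).unique (isMoebiusElement_node_node (hM x) (hM _) (hM _) (hM l))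
    have hl := moebius_graftMany_rightComb hM (l :: ts)
    have hleaf_ts := moebius_graftMany_rightComb hM (leaf :: ts)
    simp only [List.length_cons, List.cons_append, List.map_cons, rightComb,
      graftMany_node_leaf_cons] at hl hleaf_ts ⊢
    rw [hrec, hl, hleaf_ts, hrec leaf, hleaf, graft1_graftManyF_leaf_cons, graftManyF_sub,
      graftManyF_node_leaf_cons, bilinExt_single_one_single_one, graftManyF_graft1_cherry]
termination_by ts => ts.length

end Grafting

end PBT

/-- If `t = 1_r ∘ (t₁,…,t_{r−1}, |)` with `r < n = |t|` leaves, then the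
Möbius element factors as `M_t = M_{1_r} ∘ (M_{t₁}, …, M_{t_{r−1}}, |)`. -/
theorem stmt11
    (μ : PBT → PBT → ℤ) (M : PBT → (PBT →₀ ℤ))
    (hM : ∀ t w : PBT, M t w = μ w t)
    (hμrefl : ∀ t : PBT, μ t t = 1)
    (hμzero : ∀ w t : PBT, ¬ tle w t → μ w t = 0)
    (hμsum : ∀ w t : PBT, tle w t → w ≠ t →
      (∑ᶠ z : PBT, if tle w z ∧ tle z t then μ z t else 0) = 0)
    (r : ℕ) (hr : 1 ≤ r) (t : PBT) (ts : List PBT)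
    (hlen : ts.length + 1 = r)
    (ht : t = graftMany (rightComb (r - 1)) (ts ++ [PBT.leaf]))
    (hlt : r < leavesCount t) :
    M t = graftManyF (M (rightComb (r - 1))) (ts.map M ++ [Finsupp.single PBT.leaf 1]) := by
  have hMoebius (t : PBT) : IsMoebiusElement (M t) t :=
    isMoebiusElement_of_finsum ((hM t t).trans (hμrefl t))
      (fun w hw => (hM t w).trans (hμzero w t hw))
      (fun w hw hne => by simp only [hM]; exact hμsum w t hw hne)
  subst ht hlen
  exact PBT.moebius_graftMany_rightComb hMoebius ts
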